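/- Let K be a SET graph on n vertices and u any vertex of K. Then K admits a path decomposition D with D(u) ≥ 2 and |D| ≤ ⌈n/2⌉. -/

import Mathlib

open SimpleGraph

variable {V : Type*}

/-- A path decomposition of a simple graph `G`: a list of nontrivial paths of `G`
that are pairwise edge-disjoint and together cover every edge of `G`. -/
structure PathDecomp (G : SimpleGraph V) where
  paths : List (Σ a b : V, G.Walk a b)
  nontrivial : ∀ p ∈ paths, 0 < p.2.2.length
  isPath : ∀ p ∈ paths, p.2.2.IsPath
  edgeDisjoint : paths.Pairwise fun p q => ∀ e, e ∈ p.2.2.edges → e ∉ q.2.2.edges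
  covers : ∀ e ∈ G.edgeSet, ∃ p ∈ paths, e ∈ p.2.2.edges

/-- Cardinality of a path decomposition. -/
def pdCard {G : SimpleGraph V} (D : PathDecomp G) : ℕ := D.paths.length

/-- `ends D u` is the number of paths in `D` having `u` as an end vertex. -/
def ends [DecidableEq V] {G : SimpleGraph V} (D : PathDecomp G) (u : V) : ℕ :=
  (D.paths.filter fun p => p.1 = u ∨ p.2.1 = u).length

/-- The path number: minimum cardinality of a path decomposition. -/
noncomputable def pn (G : SimpleGraph V) : ℕ :=
  sInf {n | ∃ D : PathDecomp G, pdCard D = n}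

/-- Degree as the `ncard` of the neighbor set (no decidability needed). -/
noncomputable def ndeg (G : SimpleGraph V) (v : V) : ℕ := {w | G.Adj v w}.ncard

/-- A SET graph: the set of even-degree vertices consists of exactly three
mutually adjacent vertices, and every odd-degree vertex has at least two
even-degree neighbors. -/
def IsSETGraph (G : SimpleGraph V) : Prop :=
  (∃ a b c : V, a ≠ b ∧ a ≠ c ∧ b ≠ c ∧
      {v : V | Even (ndeg G v)} = {a, b, c} ∧
      G.Adj a b ∧ G.Adj a c ∧ G.Adj b c) ∧
  ∀ v : V, Odd (ndeg G v) →
    ∃ w₁ w₂ : V, w₁ ≠ w₂ ∧ G.Adj v w₁ ∧ G.Adj v w₂ ∧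
      Even (ndeg G w₁) ∧ Even (ndeg G w₂)

/-- The multiset of edges traversed by a list of vertices. -/
def pathEdges : List V → Multiset (Sym2 V)
  | [] => 0
  | [_] => 0
  | x :: y :: l => s(x, y) ::ₘ pathEdges (y :: l)

theorem pathEdges_append (l m : List V) (x y : V) :
    pathEdges (l ++ x :: y :: m) = s(x, y) ::ₘ (pathEdges (l ++ [x]) + pathEdges (y :: m)) := by
  induction l with
  | nil => simp [pathEdges]
  | cons z l ih =>
    cases l with
    | nil => simp [pathEdges, Multiset.cons_swap s(z, x)]
    | cons w l =>
      simp only [List.cons_append, pathEdges] at ih ⊢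
      rw [ih, Multiset.cons_swap, Multiset.cons_add]

theorem pathEdges_reverse (l : List V) : pathEdges l.reverse = pathEdges l := by
  induction l with
  | nil => rfl
  | cons x l ih =>
    cases l with
    | nil => rfl
    | cons y l =>
      have h : (x :: y :: l).reverse = l.reverse ++ y :: x :: [] := by simp
      rw [h, pathEdges_append, ← List.reverse_cons, ih]
      simp [pathEdges, Sym2.eq_swap]

theorem append_cons_inj_of_nodup {l l' m m' : List V} {a : V}
    (hl : (l ++ a :: m).Nodup) (h : l ++ a :: m = l' ++ a :: m') : l = l' ∧ m = m' := by
  have hnot : ∀ {k n : List V}, (k ++ a :: n).Nodup → a ∉ k := fun hk ha =>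
    (List.nodup_append.1 hk).2.2 a ha a (by simp) rfl
  have hm : ∀ {k n : List V}, (k ++ a :: n).Nodup → a ∉ n := fun hk =>
    (List.nodup_cons.1 (List.nodup_append.1 hk).2.1).1
  have := (List.append_cons_inj_of_notMem (hnot hl) (hm hl)).1 h
  exact ⟨this.1, this.2.2⟩

/-- The multiset of all edges used by a multiset of paths. -/
def systemEdges (M : Multiset (List V)) : Multiset (Sym2 V) := (M.map pathEdges).sum

@[simp] theorem systemEdges_cons (p : List V) (M : Multiset (List V)) :
    systemEdges (p ::ₘ M) = pathEdges p + systemEdges M := by simp [systemEdges]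

/-- `p` is a member of `M`, up to orientation. -/
def OrientedMem (p : List V) (M : Multiset (List V)) : Prop := p ∈ M ∨ p.reverse ∈ M

/-- Traversing `p` from its head, `a` is not reached through a vertex of `T`. -/
def AvoidsEntry (p : List V) (a : V) (T : Finset V) : Prop :=
  ∀ l c m, p = l ++ c :: a :: m → c ∉ T

theorem OrientedMem.pathEdges_le {p : List V} {M : Multiset (List V)} (h : OrientedMem p M) :
    pathEdges p ≤ systemEdges M := by
  rcases h with h | h <;> obtain ⟨N, rfl⟩ := Multiset.exists_cons_of_mem h <;>
    simp [pathEdges_reverse]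

theorem OrientedMem.edge_mem {p l m : List V} {c a : V} {M : Multiset (List V)}
    (h : OrientedMem p M) (hp : p = l ++ c :: a :: m) : s(a, c) ∈ systemEdges M := by
  refine Multiset.mem_of_le h.pathEdges_le ?_
  subst hp
  rw [pathEdges_append, Sym2.eq_swap]
  exact Multiset.mem_cons_self _ _

theorem orientedMem_cons {p q : List V} {M : Multiset (List V)} :
    OrientedMem q (p ::ₘ M) ↔ q = p ∨ q = p.reverse ∨ OrientedMem q M := by
  simp only [OrientedMem, Multiset.mem_cons]
  rw [List.reverse_eq_iff]
  tauto

/-- Every member of `M` is a nonempty list of distinct vertices. -/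
def IsPathSystem (M : Multiset (List V)) : Prop := ∀ p ∈ M, p ≠ [] ∧ p.Nodup

theorem isPathSystem_cons {p : List V} {M : Multiset (List V)} :
    IsPathSystem (p ::ₘ M) ↔ (p ≠ [] ∧ p.Nodup) ∧ IsPathSystem M := by
  simp [IsPathSystem]

section EndCount

variable [DecidableEq V]

/-- The number of ends of the vertex list `p` located at `v`. -/
def endCount (p : List V) (v : V) : ℕ :=
  (if p.head? = some v then 1 else 0) + (if p.getLast? = some v then 1 else 0)

theorem endCount_reverse (p : List V) (v : V) : endCount p.reverse v = endCount p v := by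
  simp [endCount, add_comm]

/-- The number of path ends at `v` in a multiset of paths. -/
def systemEnds (M : Multiset (List V)) (v : V) : ℕ := (M.map fun p => endCount p v).sum

@[simp] theorem systemEnds_cons (p : List V) (M : Multiset (List V)) (v : V) :
    systemEnds (p ::ₘ M) v = endCount p v + systemEnds M v := by simp [systemEnds]

theorem exists_orientedMem_of_systemEnds_pos {M : Multiset (List V)} {v : V}
    (h : 0 < systemEnds M v) : ∃ p, OrientedMem p M ∧ p.head? = some v := by
  obtain ⟨p, hp, hpos⟩ : ∃ p ∈ M, 0 < endCount p v := by
    by_contra! hcon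
    refine h.ne' (Multiset.sum_eq_zero fun x hx => ?_)
    obtain ⟨p, hp, rfl⟩ := Multiset.mem_map.1 hx
    exact Nat.le_zero.1 (hcon p hp)
  by_cases h1 : p.head? = some v
  · exact ⟨p, Or.inl hp, h1⟩
  · by_cases h2 : p.getLast? = some v
    · exact ⟨p.reverse, Or.inr (by simpa using hp), by simpa using h2⟩
    · simp [endCount, h1, h2] at hpos

/-- `M'` arises from `M` by relocating a path end from `b` to `a`, keeping the number of paths
and not creating trivial paths. -/
structure MovesEnd (M M' : Multiset (List V)) (b a : V) : Prop where
  card_eq : M'.card = M.card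
  ends_eq : ∀ v, systemEnds M' v + (if v = b then 1 else 0) =
    systemEnds M v + (if v = a then 1 else 0)
  nontrivial : (∀ p ∈ M, 2 ≤ p.length) → ∀ p ∈ M', 2 ≤ p.length

theorem MovesEnd.trans {M M' M'' : Multiset (List V)} {a b c : V}
    (h : MovesEnd M M' b c) (h' : MovesEnd M' M'' c a) : MovesEnd M M'' b a where
  card_eq := h'.card_eq.trans h.card_eq
  ends_eq v := by have := h.ends_eq v; have := h'.ends_eq v; omega
  nontrivial hM := h'.nontrivial (h.nontrivial hM)

/-- A member of a path system may be reversed so as to be listed with a given orientation. -/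
theorem OrientedMem.exists_cons {p : List V} {M : Multiset (List V)} (h : OrientedMem p M)
    (hM : IsPathSystem M) :
    ∃ N, IsPathSystem (p ::ₘ N) ∧ systemEdges (p ::ₘ N) = systemEdges M ∧
      (∀ q, OrientedMem q (p ::ₘ N) ↔ OrientedMem q M) ∧ M.card = N.card + 1 ∧
      (∀ v, systemEnds (p ::ₘ N) v = systemEnds M v) ∧
      ((∀ q ∈ M, 2 ≤ q.length) → ∀ q ∈ p ::ₘ N, 2 ≤ q.length) := by
  rcases h with h | h <;> obtain ⟨N, rfl⟩ := Multiset.exists_cons_of_mem h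
  · exact ⟨N, hM, rfl, fun _ => Iff.rfl, by simp, fun _ => rfl, fun h => h⟩
  · refine ⟨N, ?_, by simp [pathEdges_reverse], fun q => ?_, by simp, fun v => ?_, fun h => ?_⟩
    · simpa [isPathSystem_cons] using hM
    · simp only [orientedMem_cons, List.reverse_reverse]; tauto
    · simp [endCount_reverse]
    · simpa using h

/-- Replacing the initial segment `l ++ [c]` of a path through `a`, starting at `b`, by its
reversal trades the edge `ca` for the edge `ba`. -/
theorem exists_movesEnd_rotate {N : Multiset (List V)} {l r m : List V} {a b c : V}
    (hp : l ++ [c] = b :: r) (hM : IsPathSystem ((l ++ c :: a :: m) ::ₘ N)) :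
    let q := (l ++ [c]).reverse ++ a :: m
    IsPathSystem (q ::ₘ N) ∧
      s(a, c) ::ₘ systemEdges (q ::ₘ N) = s(a, b) ::ₘ systemEdges ((l ++ c :: a :: m) ::ₘ N) ∧
      MovesEnd ((l ++ c :: a :: m) ::ₘ N) (q ::ₘ N) b c := by
  intro q
  have hsplit : l ++ c :: a :: m = (l ++ [c]) ++ a :: m := by simp
  have hperm : List.Perm q (l ++ c :: a :: m) := by
    rw [hsplit]; exact (List.reverse_perm _).append_right _
  have hq : q = r.reverse ++ b :: a :: m := by simp [q, hp]
  refine ⟨?_, ?_, ⟨by simp, fun v => ?_, fun h => ?_⟩⟩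
  · rw [isPathSystem_cons] at hM ⊢
    exact ⟨⟨by simp [q], hperm.nodup_iff.2 hM.1.2⟩, hM.2⟩
  · have h1 : pathEdges (r.reverse ++ [b]) = pathEdges (l ++ [c]) := by
      rw [hp, ← List.reverse_cons, pathEdges_reverse]
    rw [systemEdges_cons, systemEdges_cons, hq, pathEdges_append, pathEdges_append, h1,
      Sym2.eq_swap (a := b), Sym2.eq_swap (a := c), Multiset.cons_add, Multiset.cons_add,
      Multiset.cons_swap]
  · have h1 : (l ++ c :: a :: m).head? = some b := by rw [hsplit, hp]; rfl
    have h2 : q.head? = some c := by simp [q]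
    have h3 : q.getLast? = (l ++ c :: a :: m).getLast? := by
      rw [hsplit]
      simp only [q, List.getLast?_append, List.getLast?_cons, Option.some_or]
    simp only [systemEnds_cons, endCount, h1, h2, h3, Option.some.injEq, eq_comm (a := v)]
    omega
  · simp only [Multiset.mem_cons, forall_eq_or_imp] at h ⊢
    exact ⟨hperm.length_eq ▸ h.1, h.2⟩

/-- If every neighbour `v ∉ T` of `a` is the head of a path not entering `a` through `T`, then
an edge `ab` with `b ∉ T` can be absorbed into a path system at the cost of moving one path end
from `b` to `a`. -/
theorem exists_movesEnd_of_avoidsEntry [Fintype V] {X : Multiset (Sym2 V)} (hX : X.Nodup) {a : V}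
    (T : Finset V) (b : V) (M : Multiset (List V)) (hab : a ≠ b) (hb : b ∉ T)
    (hM : IsPathSystem M) (hE : s(a, b) ::ₘ systemEdges M = X)
    (hT : ∀ v, v ∉ T → s(a, v) ∈ X → ∃ p, OrientedMem p M ∧ p.head? = some v ∧ AvoidsEntry p a T) :
    ∃ M', IsPathSystem M' ∧ systemEdges M' = X ∧ MovesEnd M M' b a := by
  obtain ⟨p, hpM, hhead, havoid⟩ := hT b hb (hE ▸ Multiset.mem_cons_self _ _)
  obtain ⟨N, hN, hNE, hNmem, hNcard, hNends, hNtriv⟩ := hpM.exists_cons hM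
  have hmove : MovesEnd M (p ::ₘ N) b b := ⟨by simp [hNcard], fun v => by rw [hNends], hNtriv⟩
  have hbE : s(a, b) ∉ systemEdges M := by
    rw [← hE] at hX; exact (Multiset.nodup_cons.1 hX).1
  obtain ⟨r, rfl⟩ : ∃ r, p = b :: r := by
    cases p <;> simp_all
  by_cases ha : a ∈ b :: r
  · obtain ⟨s, m, hs⟩ := List.append_of_mem ha
    obtain ⟨l, c, rfl⟩ : ∃ l c, s = l ++ [c] := by
      rcases List.eq_nil_or_concat s with rfl | ⟨l, c, rfl⟩
      · simp only [List.nil_append, List.cons.injEq] at hs; exact absurd hs.1.symm hab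
      · exact ⟨l, c, by simp⟩
    obtain ⟨r', hr'⟩ : ∃ r', l ++ [c] = b :: r' := by
      cases l <;> simp_all
    have hs' : b :: r = l ++ c :: a :: m := by simpa using hs
    have hcT : c ∉ T := havoid l c m hs'
    have hcE := hpM.edge_mem hs'
    have hcb : c ≠ b := by rintro rfl; exact hbE hcE
    have hca : a ≠ c := by
      rintro rfl
      have := (hN (b :: r) (by simp)).2
      rw [hs'] at this
      simp [List.nodup_append] at this
    rw [hs'] at hN hNE hNmem hmove
    obtain ⟨hQ, hQE, hQmove⟩ := exists_movesEnd_rotate (r := r') hr' hN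
    set q := (l ++ [c]).reverse ++ a :: m with hq
    have hnodup := (isPathSystem_cons.1 hN).1.2
    have hcard : (Finset.univ \ insert b T).card < (Finset.univ \ T).card := by
      refine Finset.card_lt_card ⟨fun x => by simp +contextual, fun h => ?_⟩
      have := h (x := b) (by simpa using hb)
      simp at this
    obtain ⟨M', hM', hM'E, hmove'⟩ := exists_movesEnd_of_avoidsEntry hX (insert b T) c (q ::ₘ N)
      hca (by simp [hcT, hcb]) hQ (by rw [hQE, hNE, hE]) (by
        intro v hv hvX
        simp only [Finset.mem_insert, not_or] at hv
        obtain ⟨o, hoM, hov, ho⟩ := hT v hv.2 hvX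
        have hob : ∀ k d n, o = k ++ d :: a :: n → d ∉ insert b T := by
          intro k d n hk
          simp only [Finset.mem_insert, not_or]
          refine ⟨?_, ho k d n hk⟩
          rintro rfl
          exact hbE (hoM.edge_mem hk)
        rcases orientedMem_cons.1 ((hNmem o).2 hoM) with h | h | h
        · rw [h, ← hs'] at hov
          simp only [List.head?_cons, Option.some.injEq] at hov
          exact absurd hov.symm hv.1
        · have hrev : q.reverse = m.reverse ++ a :: (l ++ [c]) := by simp [hq]
          have horev : o = m.reverse ++ a :: (c :: l.reverse) := by simp [h]
          refine ⟨q.reverse, orientedMem_cons.2 (Or.inr (Or.inl rfl)), ?_, ?_⟩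
          · rw [← hov, hrev, horev]
            cases m.reverse <;> rfl
          · intro k d n hk
            have hk' : m.reverse ++ a :: (l ++ [c]) = (k ++ [d]) ++ a :: n := by
              rw [← hrev, hk]; simp
            have hnd : (m.reverse ++ a :: (l ++ [c])).Nodup := by
              rw [← hrev, List.nodup_reverse]; exact (isPathSystem_cons.1 hQ).1.2
            have := (append_cons_inj_of_nodup hnd hk').1
            exact hob k d (c :: l.reverse) (by rw [horev, this]; simp)
        · exact ⟨o, orientedMem_cons.2 (Or.inr (Or.inr h)), hov, hob⟩)
    exact ⟨M', hM', hM'E, (hmove.trans hQmove).trans hmove'⟩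
  · have hN' := isPathSystem_cons.1 hN
    refine ⟨(a :: b :: r) ::ₘ N, ?_, ?_, by simp [hNcard], fun v => ?_, fun h => ?_⟩
    · exact isPathSystem_cons.2 ⟨⟨by simp, List.nodup_cons.2 ⟨ha, hN'.1.2⟩⟩, hN'.2⟩
    · rw [← hE, ← hNE]; simp [pathEdges]
    · rw [← hNends v]
      simp only [systemEnds_cons, endCount, List.head?_cons, List.getLast?_cons_cons,
        Option.some.injEq, eq_comm (a := v)]
      omega
    · have := hNtriv h
      simp only [Multiset.mem_cons, forall_eq_or_imp] at this ⊢
      exact ⟨by simp, this.2⟩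
  termination_by (Finset.univ \ T).card

end EndCount

/-- In a path system without repeated edges, at most one oriented path traverses `d`, `a` in
this order. -/
theorem OrientedMem.eq_of_edge {M : Multiset (List V)} (hM : IsPathSystem M)
    (hE : (systemEdges M).Nodup) {p p' l l' m m' : List V} {d a : V}
    (hp : OrientedMem p M) (hp' : OrientedMem p' M)
    (h : p = l ++ d :: a :: m) (h' : p' = l' ++ d :: a :: m') : p' = p := by
  classical
  obtain ⟨N, hN, hNE, hNmem, -⟩ := hp.exists_cons hM
  rw [← hNE, systemEdges_cons, Multiset.nodup_add] at hE
  have hnd := (isPathSystem_cons.1 hN).1.2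
  rcases orientedMem_cons.1 ((hNmem p').2 hp') with h1 | h1 | h1
  · exact h1
  · exfalso
    have hrev : p.reverse = m.reverse ++ a :: (d :: l.reverse) := by simp [h]
    have hsplit : m.reverse ++ a :: (d :: l.reverse) = (l' ++ [d]) ++ a :: m' := by
      rw [← hrev, ← h1, h']; simp
    have hnd' : (m.reverse ++ a :: (d :: l.reverse)).Nodup := by
      rw [← hrev, List.nodup_reverse]; exact hnd
    have hm := (append_cons_inj_of_nodup hnd' hsplit).1
    have hdm : d ∈ m.reverse := by simp [hm]
    exact (List.nodup_append.1 hnd').2.2 d hdm d (by simp) rfl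
  · exfalso
    have hmem : s(a, d) ∈ pathEdges p := by
      rw [h, pathEdges_append, Sym2.eq_swap]
      exact Multiset.mem_cons_self _ _
    exact Multiset.disjoint_left.1 hE.2.2 hmem (h1.edge_mem h')

/-- `M` is a path system whose edges are exactly those of `X`, each used once. -/
structure Decomposes (M : Multiset (List V)) (X : Finset (Sym2 V)) : Prop where
  isPathSystem : IsPathSystem M
  edges_eq : systemEdges M = X.val

section Decompositions

variable [DecidableEq V]

/-- The number of edges of `X` containing `v`. -/
def edgeDegree (X : Finset (Sym2 V)) (v : V) : ℕ := (X.filter (v ∈ ·)).card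

theorem edgeDegree_erase {X : Finset (Sym2 V)} {a b : V} (hab : a ≠ b) (h : s(a, b) ∈ X) (v : V) :
    edgeDegree (X.erase s(a, b)) v + (if v = a then 1 else 0) + (if v = b then 1 else 0) =
      edgeDegree X v := by
  unfold edgeDegree
  rw [Finset.filter_erase]
  by_cases hv : v ∈ s(a, b)
  · have hmem : s(a, b) ∈ X.filter (v ∈ ·) := Finset.mem_filter.2 ⟨h, hv⟩
    have := Finset.card_erase_add_one hmem
    rw [Sym2.mem_iff] at hv
    rcases hv with rfl | rfl
    · simp only [hab, if_true, if_false]; omega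
    · simp only [hab.symm, if_true, if_false]; omega
  · rw [Finset.erase_eq_of_notMem (by simp_all)]
    simp_all

theorem edgeDegree_pos {X : Finset (Sym2 V)} {a v : V} (h : s(a, v) ∈ X) : 0 < edgeDegree X v :=
  Finset.card_pos.2 ⟨s(a, v), by simp [h]⟩

theorem exists_mem_of_edgeDegree_pos {X : Finset (Sym2 V)} {v : V} (h : 0 < edgeDegree X v) :
    ∃ w, s(v, w) ∈ X := by
  obtain ⟨e, he⟩ := Finset.card_pos.1 h
  obtain ⟨heX, w, rfl⟩ := Finset.mem_filter.1 he
  exact ⟨w, heX⟩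

theorem Decomposes.absorb_of_avoidsEntry [Fintype V] {X : Finset (Sym2 V)} {a b : V}
    {M : Multiset (List V)} {T : Finset V} (hM : Decomposes M (X.erase s(a, b))) (hab : a ≠ b)
    (h : s(a, b) ∈ X) (hb : b ∉ T)
    (hT : ∀ v, v ∉ T → s(a, v) ∈ X → ∃ p, OrientedMem p M ∧ p.head? = some v ∧ AvoidsEntry p a T) :
    ∃ M', Decomposes M' X ∧ MovesEnd M M' b a := by
  obtain ⟨M', h1, h2, h3⟩ := exists_movesEnd_of_avoidsEntry X.nodup T b M hab hb hM.isPathSystem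
    (by rw [hM.edges_eq, Finset.erase_val]; exact Multiset.cons_erase h) hT
  exact ⟨M', ⟨h1, h2⟩, h3⟩

theorem Decomposes.absorb [Fintype V] {X : Finset (Sym2 V)} {a b : V} {M : Multiset (List V)}
    (hM : Decomposes M (X.erase s(a, b))) (hab : a ≠ b) (h : s(a, b) ∈ X)
    (hpos : ∀ v, s(a, v) ∈ X → 0 < systemEnds M v) :
    ∃ M', Decomposes M' X ∧ MovesEnd M M' b a :=
  hM.absorb_of_avoidsEntry (T := ∅) hab h (by simp) fun v _ hv => by
    obtain ⟨p, hp, hpv⟩ := exists_orientedMem_of_systemEnds_pos (hpos v hv)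
    exact ⟨p, hp, hpv, by simp [AvoidsEntry]⟩

/-- If two edges `ub`, `uc` are missing and at most one neighbour `z` of `u` is not a path end,
then at least one of the two edges can be absorbed. -/
theorem Decomposes.absorb_or_absorb [Fintype V] {X : Finset (Sym2 V)} {u b c z : V}
    {M : Multiset (List V)} (hM : Decomposes M ((X.erase s(u, b)).erase s(u, c)))
    (hub : u ≠ b) (huc : u ≠ c) (hbc : b ≠ c) (hb : s(u, b) ∈ X) (hc : s(u, c) ∈ X)
    (hpos : ∀ v, v ≠ z → s(u, v) ∈ X → 0 < systemEnds M v) :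
    (∃ M', Decomposes M' (X.erase s(u, c)) ∧ MovesEnd M M' b u) ∨
      ∃ M', Decomposes M' (X.erase s(u, b)) ∧ MovesEnd M M' c u := by
  classical
  let closed : Finset V → Prop := fun T => z ∈ T ∧ ∀ v ∈ T, v ≠ z → ∃ p l d m,
    OrientedMem p M ∧ p.head? = some v ∧ p = l ++ d :: u :: m ∧ d ∈ T
  obtain ⟨T, hTmem, hTmax⟩ := (Finset.univ.filter closed).exists_max_image Finset.card
    ⟨{z}, by simp [closed]⟩
  obtain ⟨hzT, hT⟩ : closed T := by simpa using hTmem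
  have hne : s(u, b) ≠ s(u, c) := by simp [hbc, hub.symm]
  have havoid : ∀ v, v ∉ T → s(u, v) ∈ X →
      ∃ p, OrientedMem p M ∧ p.head? = some v ∧ AvoidsEntry p u T := by
    intro v hv hvX
    have hvz : v ≠ z := by rintro rfl; exact hv hzT
    obtain ⟨p, hp, hpv⟩ := exists_orientedMem_of_systemEnds_pos (hpos v hvz hvX)
    refine ⟨p, hp, hpv, fun l d m hl hd => ?_⟩
    have hclosed : closed (insert v T) := by
      refine ⟨by simp [hzT], fun w hw hwz => ?_⟩
      rcases Finset.mem_insert.1 hw with rfl | hw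
      · exact ⟨p, l, d, m, hp, hpv, hl, by simp [hd]⟩
      · obtain ⟨p', l', d', m', h1, h2, h3, h4⟩ := hT w hw hwz
        exact ⟨p', l', d', m', h1, h2, h3, by simp [h4]⟩
    have := hTmax _ (by simpa using hclosed)
    rw [Finset.card_insert_of_notMem hv] at this
    omega
  have hnot : b ∉ T ∨ c ∉ T := by
    by_contra! hcon
    choose! p l d m hp hpv hpl hd using hT
    have hmaps : ∀ v ∈ T.erase z, d v ∈ (T.erase b).erase c := by
      intro v hv
      obtain ⟨hvz, hv⟩ := Finset.mem_erase.1 hv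
      have hmem := (hp v hv hvz).edge_mem (hpl v hv hvz)
      rw [hM.edges_eq, Finset.mem_val, Finset.mem_erase, Finset.mem_erase] at hmem
      refine Finset.mem_erase.2 ⟨?_, Finset.mem_erase.2 ⟨?_, hd v hv hvz⟩⟩
      · intro h; exact hmem.1 (by rw [h])
      · intro h; exact hmem.2.1 (by rw [h])
    have hinj : Set.InjOn d (T.erase z : Finset V) := by
      intro v hv w hw hvw
      obtain ⟨hvz, hv⟩ := Finset.mem_erase.1 hv
      obtain ⟨hwz, hw⟩ := Finset.mem_erase.1 hw
      have heq := OrientedMem.eq_of_edge hM.isPathSystem (by rw [hM.edges_eq]; exact Finset.nodup _)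
        (hp v hv hvz) (hp w hw hwz) (hpl v hv hvz) (by rw [hvw]; exact hpl w hw hwz)
      have := hpv w hw hwz
      rw [heq, hpv v hv hvz] at this
      exact Option.some_injective _ this
    have hle := Finset.card_le_card_of_injOn d hmaps hinj
    have h1 := Finset.card_erase_add_one hzT
    have h2 := Finset.card_erase_add_one hcon.1
    have h3 := Finset.card_erase_add_one (Finset.mem_erase.2 ⟨hbc.symm, hcon.2⟩)
    omega
  rcases hnot with h | h
  · left
    rw [Finset.erase_right_comm] at hM
    exact hM.absorb_of_avoidsEntry hub (Finset.mem_erase.2 ⟨hne, hb⟩) h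
      fun v hv hvX => havoid v hv (Finset.mem_of_mem_erase hvX)
  · right
    exact hM.absorb_of_avoidsEntry huc (Finset.mem_erase.2 ⟨hne.symm, hc⟩) h
      fun v hv hvX => havoid v hv (Finset.mem_of_mem_erase hvX)

theorem Decomposes.cons_edge {X : Finset (Sym2 V)} {a b : V} {M : Multiset (List V)}
    (hM : Decomposes M (X.erase s(a, b))) (hab : a ≠ b) (h : s(a, b) ∈ X) :
    Decomposes ([a, b] ::ₘ M) X where
  isPathSystem := isPathSystem_cons.2 ⟨by simp [hab], hM.isPathSystem⟩
  edges_eq := by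
    rw [systemEdges_cons, hM.edges_eq, Finset.erase_val]
    simpa [pathEdges] using Multiset.cons_erase h

theorem endCount_pair (a b v : V) :
    endCount [a, b] v = (if v = a then 1 else 0) + (if v = b then 1 else 0) := by
  simp [endCount, eq_comm]

/-- If all nonisolated vertices have odd degree, there is a decomposition with one path end at
each of them. -/
def OddDecomposable (X : Finset (Sym2 V)) : Prop :=
  (∀ v, Even (edgeDegree X v) → edgeDegree X v = 0) →
    ∃ M, Decomposes M X ∧ ∀ v, systemEnds M v = edgeDegree X v % 2

/-- If all nonisolated vertices but two vertices `x`, `y` of even degree have odd degree, there is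
a decomposition with two path ends at one of `x`, `y`, none at the other one, and one path end at
each nonisolated remaining vertex. -/
def TwoEvenDecomposable (X : Finset (Sym2 V)) : Prop :=
  ∀ x y, x ≠ y → Even (edgeDegree X x) → Even (edgeDegree X y) →
    (∀ v, v ≠ x → v ≠ y → Even (edgeDegree X v) → edgeDegree X v = 0) →
    ∃ M, Decomposes M X ∧
      (systemEnds M x = 2 ∧ systemEnds M y = 0 ∨ systemEnds M x = 0 ∧ systemEnds M y = 2) ∧
      ∀ v, v ≠ x → v ≠ y → systemEnds M v = edgeDegree X v % 2

theorem OddDecomposable.of_erase [Fintype V] {X : Finset (Sym2 V)} (hX : ∀ v, s(v, v) ∉ X)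
    (h : ∀ e ∈ X, TwoEvenDecomposable (X.erase e)) : OddDecomposable X := by
  intro hodd
  simp only [Nat.even_iff] at hodd
  rcases X.eq_empty_or_nonempty with rfl | ⟨e, he⟩
  · exact ⟨0, ⟨by simp [IsPathSystem], by simp [systemEdges]⟩, by simp [systemEnds, edgeDegree]⟩
  induction e with | h x y =>
  have hxy : x ≠ y := by rintro rfl; exact hX _ he
  have hdeg := edgeDegree_erase hxy he
  have hnbr : ∀ {w v}, s(w, v) ∈ X → edgeDegree X v % 2 = 1 := fun {w v} hv => by
    have := edgeDegree_pos hv; have := hodd v; omega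
  have hx := hdeg x
  have hy := hdeg y
  have hxo := hnbr (Sym2.eq_swap ▸ he : s(y, x) ∈ X)
  have hyo := hnbr he
  simp only [hxy, hxy.symm, if_true, if_false] at hx hy
  obtain ⟨M, hM, hcases, hother⟩ := h _ he x y hxy (by rw [Nat.even_iff]; omega)
    (by rw [Nat.even_iff]; omega) fun v hvx hvy hv => by
      have h1 := hdeg v
      have := hodd v
      rw [Nat.even_iff] at hv
      simp only [hvx, hvy, if_false] at h1
      omega
  have hother' : ∀ v, v ≠ x → v ≠ y → systemEnds M v = edgeDegree X v % 2 := fun v hvx hvy => by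
    have := hdeg v
    simp only [hvx, hvy, if_false] at this
    rw [hother v hvx hvy]; omega
  have key : ∀ a b, a ≠ b → s(a, b) ∈ X → Decomposes M (X.erase s(a, b)) →
      systemEnds M a = 0 → systemEnds M b = 2 →
      (∀ v, v ≠ a → v ≠ b → systemEnds M v = edgeDegree X v % 2) →
      ∃ M', Decomposes M' X ∧ ∀ v, systemEnds M' v = edgeDegree X v % 2 := by
    intro a b hab habX hM ha hb hab'
    obtain ⟨M', hM', hmove⟩ := hM.absorb hab habX fun v hv => by
      by_cases hvb : v = b
      · subst hvb; omega
      · have hva : v ≠ a := by rintro rfl; exact hX _ hv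
        rw [hab' v hva hvb, hnbr hv]; exact one_pos
    refine ⟨M', hM', fun v => ?_⟩
    have hv := hmove.ends_eq v
    by_cases hva : v = a
    · subst hva
      rw [hnbr (Sym2.eq_swap ▸ habX : s(b, v) ∈ X)]
      simp only [hab, if_true, if_false] at hv; omega
    · by_cases hvb : v = b
      · subst hvb
        rw [hnbr habX]
        simp only [hab.symm, if_true, if_false] at hv; omega
      · simp only [hva, hvb, if_false] at hv
        rw [← hab' v hva hvb]; omega
  rcases hcases with ⟨h1, h2⟩ | ⟨h1, h2⟩
  · exact key y x hxy.symm (Sym2.eq_swap ▸ he) (Sym2.eq_swap ▸ hM) h2 h1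
      fun v hy hx => hother' v hx hy
  · exact key x y hxy he hM h1 h2 hother'

theorem TwoEvenDecomposable.of_erase [Fintype V] {X : Finset (Sym2 V)} (hX : ∀ v, s(v, v) ∉ X)
    (hodd : OddDecomposable X) (h : ∀ e ∈ X, OddDecomposable (X.erase e))
    (h' : ∀ e ∈ X, TwoEvenDecomposable (X.erase e)) : TwoEvenDecomposable X := by
  intro x y hxy hx hy hother
  simp only [Nat.even_iff] at hx hy hother
  by_cases hadj : s(x, y) ∈ X
  · have hdeg := edgeDegree_erase hxy hadj
    obtain ⟨M, hM, hends⟩ := h _ hadj fun v hv => by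
      have := hdeg v
      rw [Nat.even_iff] at hv
      by_cases hvx : v = x
      · subst hvx; simp only [hxy, if_true, if_false] at this; omega
      · by_cases hvy : v = y
        · subst hvy; simp only [hxy.symm, if_true, if_false] at this; omega
        · have := hother v hvx hvy
          simp only [hvx, hvy, if_false] at *
          omega
    have hxe := hdeg x
    have hye := hdeg y
    simp only [hxy, hxy.symm, if_true, if_false] at hxe hye
    have hends' : ∀ v, v ≠ x → v ≠ y → systemEnds M v = edgeDegree X v % 2 := fun v hvx hvy => by
      have := hdeg v
      simp only [hvx, hvy, if_false] at this
      rw [hends v]; omega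
    have hMx : systemEnds M x = 1 := by rw [hends x]; omega
    have hMy : systemEnds M y = 1 := by rw [hends y]; omega
    obtain ⟨M', hM', hmove⟩ := hM.absorb hxy hadj fun v hv => by
      have hvx : v ≠ x := by rintro rfl; exact hX _ hv
      by_cases hvy : v = y
      · subst hvy; omega
      · have := hother v hvx hvy
        have := edgeDegree_pos hv
        rw [hends' v hvx hvy]; omega
    refine ⟨M', hM', Or.inl ?_, fun v hvx hvy => ?_⟩
    · have h1 := hmove.ends_eq x
      have h2 := hmove.ends_eq y
      simp only [hxy, hxy.symm, if_true, if_false] at h1 h2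
      omega
    · have h1 := hmove.ends_eq v
      simp only [hvx, hvy, if_false] at h1
      rw [← hends' v hvx hvy]; omega
  by_cases hiso : edgeDegree X x = 0 ∧ edgeDegree X y = 0
  · obtain ⟨M, hM, hends⟩ := hodd fun v hv => by
      rw [Nat.even_iff] at hv
      by_cases hvx : v = x
      · rw [hvx]; exact hiso.1
      · by_cases hvy : v = y
        · rw [hvy]; exact hiso.2
        · exact hother v hvx hvy hv
    refine ⟨[x] ::ₘ M, ⟨isPathSystem_cons.2 ⟨by simp, hM.isPathSystem⟩, by
      simp [pathEdges, hM.edges_eq]⟩, Or.inl ?_, fun v hvx hvy => ?_⟩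
    · simp [endCount, hends, hx, hy, hxy]
    · simp [endCount, hends, Ne.symm hvx]
  have key : ∀ x y z, x ≠ y → edgeDegree X x % 2 = 0 → edgeDegree X y % 2 = 0 →
      (∀ v, v ≠ x → v ≠ y → edgeDegree X v % 2 = 0 → edgeDegree X v = 0) → s(x, y) ∉ X →
      s(x, z) ∈ X → ∃ M, Decomposes M X ∧
      (systemEnds M x = 2 ∧ systemEnds M y = 0 ∨ systemEnds M x = 0 ∧ systemEnds M y = 2) ∧
      ∀ v, v ≠ x → v ≠ y → systemEnds M v = edgeDegree X v % 2 := by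
    intro x y z hxy hx hy hother hadj hz
    have hxz : x ≠ z := by rintro rfl; exact hX _ hz
    have hzy : z ≠ y := by rintro rfl; exact hadj hz
    have hdeg := edgeDegree_erase hxz hz
    have hzo : edgeDegree X z % 2 = 1 := by
      have := edgeDegree_pos hz; have := hother z hxz.symm hzy; omega
    have hxe := hdeg x
    have hye := hdeg y
    have hze := hdeg z
    simp only [hxy.symm, hxz, hxz.symm, hzy.symm, if_true, if_false] at hxe hye hze
    obtain ⟨M, hM, hcases, hends⟩ := h' _ hz z y hzy (by rw [Nat.even_iff]; omega)
      (by rw [Nat.even_iff]; omega) fun v hvz hvy hv => by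
        rw [Nat.even_iff] at hv
        by_cases hvx : v = x
        · subst hvx; omega
        · have h1 := hdeg v
          have h2 := hother v hvx hvy
          simp only [hvx, hvz, if_false] at h1
          omega
    have hends' : ∀ v, v ≠ x → v ≠ y → v ≠ z → systemEnds M v = edgeDegree X v % 2 :=
      fun v hvx hvy hvz => by
        have h1 := hdeg v
        simp only [hvx, hvz, if_false] at h1
        rw [hends v hvz hvy]; omega
    have hMx : systemEnds M x = 1 := by rw [hends x hxz hxy]; omega
    have hpos : ∀ w v, s(w, v) ∈ X → v ≠ x → v ≠ y → v ≠ z → 0 < systemEnds M v :=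
      fun w v hv hvx hvy hvz => by
        have := edgeDegree_pos hv
        have := hother v hvx hvy
        rw [hends' v hvx hvy hvz]; omega
    rcases hcases with ⟨h1, h2⟩ | ⟨h1, h2⟩
    · obtain ⟨M', hM', hmove⟩ := hM.absorb hxz hz fun v hv => by
        have hvx : v ≠ x := by rintro rfl; exact hX _ hv
        have hvy : v ≠ y := by rintro rfl; exact hadj hv
        by_cases hvz : v = z
        · subst hvz; omega
        · exact hpos x v hv hvx hvy hvz
      refine ⟨M', hM', Or.inl ?_, fun v hvx hvy => ?_⟩
      · have e1 := hmove.ends_eq x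
        have e2 := hmove.ends_eq y
        simp only [hxy.symm, hxz, hzy.symm, if_true, if_false] at e1 e2
        omega
      · have e := hmove.ends_eq v
        by_cases hvz : v = z
        · subst hvz; simp only [hvx, if_true, if_false] at e; omega
        · simp only [hvx, hvz, if_false] at e
          rw [← hends' v hvx hvy hvz]; omega
    · have hz' : s(z, x) ∈ X := Sym2.eq_swap ▸ hz
      obtain ⟨M', hM', hmove⟩ := (Sym2.eq_swap ▸ hM : Decomposes M (X.erase s(z, x))).absorb
        hxz.symm hz' fun v hv => by
          have hvz : v ≠ z := by rintro rfl; exact hX _ hv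
          by_cases hvx : v = x
          · subst hvx; omega
          by_cases hvy : v = y
          · subst hvy; omega
          exact hpos z v hv hvx hvy hvz
      refine ⟨M', hM', Or.inr ?_, fun v hvx hvy => ?_⟩
      · have e1 := hmove.ends_eq x
        have e2 := hmove.ends_eq y
        simp only [hxy.symm, hxz, hzy.symm, if_true, if_false] at e1 e2
        omega
      · have e := hmove.ends_eq v
        by_cases hvz : v = z
        · subst hvz; simp only [hvx, if_true, if_false] at e; omega
        · simp only [hvx, hvz, if_false] at e
          rw [← hends' v hvx hvy hvz]; omega
  by_cases hx0 : edgeDegree X x = 0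
  · obtain ⟨z, hz⟩ := exists_mem_of_edgeDegree_pos
      (Nat.pos_of_ne_zero fun hy0 => hiso ⟨hx0, hy0⟩ : 0 < edgeDegree X y)
    obtain ⟨M, hM, hcases, hends⟩ := key y x z hxy.symm hy hx (fun v h1 h2 => hother v h2 h1)
      (Sym2.eq_swap ▸ hadj) hz
    exact ⟨M, hM, hcases.symm.imp And.symm And.symm, fun v h1 h2 => hends v h2 h1⟩
  · obtain ⟨z, hz⟩ := exists_mem_of_edgeDegree_pos (Nat.pos_of_ne_zero hx0)
    exact key x y z hxy hx hy hother hadj hz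

theorem oddDecomposable_and_twoEvenDecomposable [Fintype V] (X : Finset (Sym2 V))
    (hX : ∀ v, s(v, v) ∉ X) : OddDecomposable X ∧ TwoEvenDecomposable X := by
  have ih : ∀ e ∈ X, OddDecomposable (X.erase e) ∧ TwoEvenDecomposable (X.erase e) :=
    fun e he => oddDecomposable_and_twoEvenDecomposable (X.erase e)
      fun v hv => hX v (Finset.mem_of_mem_erase hv)
  have hodd := OddDecomposable.of_erase hX fun e he => (ih e he).2
  exact ⟨hodd, .of_erase hX hodd (fun e he => (ih e he).1) fun e he => (ih e he).2⟩
  termination_by X.card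
  decreasing_by exact Finset.card_erase_lt_of_mem he

/-- If all nonisolated vertices except possibly `c` have odd degree, there is a decomposition with
one path end at each odd vertex and no others. -/
theorem exists_decomposes_of_one_even [Fintype V] (X : Finset (Sym2 V)) (hX : ∀ v, s(v, v) ∉ X)
    (c : V) (hc : edgeDegree X c % 2 = 0)
    (hother : ∀ v, v ≠ c → edgeDegree X v % 2 = 0 → edgeDegree X v = 0) :
    ∃ M, Decomposes M X ∧ ∀ v, systemEnds M v = edgeDegree X v % 2 := by
  by_cases hc0 : edgeDegree X c = 0
  · refine (oddDecomposable_and_twoEvenDecomposable X hX).1 fun v hv => ?_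
    by_cases hvc : v = c
    · rw [hvc, hc0]
    · exact hother v hvc (Nat.even_iff.1 hv)
  obtain ⟨z, hz'⟩ := exists_mem_of_edgeDegree_pos (Nat.pos_of_ne_zero hc0)
  have hcz : z ≠ c := by rintro rfl; exact hX _ hz'
  have hz : s(z, c) ∈ X := Sym2.eq_swap ▸ hz'
  have hdeg := edgeDegree_erase hcz hz
  have hzo : edgeDegree X z % 2 = 1 := by
    have := edgeDegree_pos hz'; have := hother z hcz; omega
  have hce := hdeg c
  have hze := hdeg z
  simp only [hcz, hcz.symm, if_true, if_false] at hce hze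
  obtain ⟨M, hM, hends⟩ := exists_decomposes_of_one_even (X.erase s(z, c))
    (fun v hv => hX v (Finset.mem_of_mem_erase hv)) z (by omega) fun v hvz hv => by
      by_cases hvc : v = c
      · subst hvc; omega
      · have h1 := hdeg v
        have := hother v hvc
        simp only [hvz, hvc, if_false] at h1
        omega
  obtain ⟨M', hM', hmove⟩ := hM.absorb hcz hz fun v hv => by
    have hvz : v ≠ z := by rintro rfl; exact hX _ hv
    rw [hends v]
    by_cases hvc : v = c
    · subst hvc; omega
    · have h1 := hdeg v
      have := hother v hvc
      have := edgeDegree_pos hv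
      simp only [hvz, hvc, if_false] at h1
      omega
  refine ⟨M', hM', fun v => ?_⟩
  have h1 := hmove.ends_eq v
  have h2 := hdeg v
  rw [hends v] at h1
  by_cases hvc : v = c
  · subst hvc; simp only [hcz.symm, if_true, if_false] at h1; omega
  · by_cases hvz : v = z
    · subst hvz; simp only [hcz, if_true, if_false] at h1; omega
    · simp only [hvc, hvz, if_false] at h1 h2
      rw [← h2]; omega
  termination_by X.card
  decreasing_by exact Finset.card_erase_lt_of_mem hz

end Decompositions

section Triangle

variable [DecidableEq V]

theorem sum_endCount [Fintype V] {p : List V} (hp : p ≠ []) : ∑ v, endCount p v = 2 := by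
  obtain ⟨x, hx⟩ := Option.isSome_iff_exists.1 (List.isSome_head?.2 hp)
  obtain ⟨y, hy⟩ := Option.isSome_iff_exists.1 (List.getLast?_isSome.2 hp)
  simp [endCount, hx, hy, Finset.sum_add_distrib]

theorem IsPathSystem.sum_systemEnds [Fintype V] {M : Multiset (List V)} (hM : IsPathSystem M) :
    ∑ v, systemEnds M v = 2 * M.card := by
  induction M using Multiset.induction with
  | empty => simp [systemEnds]
  | cons p M ih =>
    rw [isPathSystem_cons] at hM
    simp only [systemEnds_cons, Finset.sum_add_distrib, sum_endCount hM.1.1, ih hM.2,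
      Multiset.card_cons]
    ring

/-- If `c` is the only vertex of even degree, there is a decomposition into nontrivial paths with
exactly one path end at each vertex other than `c`. -/
theorem exists_decomposes_of_unique_even [Fintype V] {X : Finset (Sym2 V)}
    (hX : ∀ v, s(v, v) ∉ X) {c : V} (hc : edgeDegree X c % 2 = 0)
    (hother : ∀ v, v ≠ c → edgeDegree X v % 2 = 1) :
    ∃ M, Decomposes M X ∧ (∀ p ∈ M, 2 ≤ p.length) ∧ 2 * M.card + 1 = Fintype.card V ∧
      systemEnds M c = 0 ∧ ∀ v, v ≠ c → systemEnds M v = 1 := by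
  obtain ⟨M, hM, hends⟩ := exists_decomposes_of_one_even X hX c hc fun v hv h => by
    rw [hother v hv] at h; omega
  refine ⟨M, hM, fun p hp => ?_, ?_, by rw [hends, hc], fun v hv => by rw [hends, hother v hv]⟩
  · obtain ⟨N, rfl⟩ := Multiset.exists_cons_of_mem hp
    match p, hp, hM, hends with
    | [], _, hM, _ => exact absurd rfl (isPathSystem_cons.1 hM.isPathSystem).1.1
    | [x], _, _, hends =>
      have := hends x
      simp only [systemEnds_cons, endCount, List.head?_cons, List.getLast?_singleton,
        if_true] at this
      omega
    | _ :: _ :: _, _, _, _ => simp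
  · rw [← hM.isPathSystem.sum_systemEnds, ← Finset.add_sum_erase _ _ (Finset.mem_univ c),
      Finset.sum_congr rfl fun v hv => by
        rw [hends, hother v (Finset.ne_of_mem_erase hv)], hends, hc]
    have := Finset.card_erase_add_one (Finset.mem_univ c)
    simpa using this

/-- A decomposition into at most `⌈n/2⌉` nontrivial paths, at least two of them ending at `u`. -/
def HasSpecialDecomposition [Fintype V] (X : Finset (Sym2 V)) (u : V) : Prop :=
  ∃ M, Decomposes M X ∧ (∀ p ∈ M, 2 ≤ p.length) ∧ 2 ≤ systemEnds M u ∧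
    2 * M.card ≤ Fintype.card V + 1

theorem hasSpecialDecomposition_of_even [Fintype V] {X : Finset (Sym2 V)} (hX : ∀ v, s(v, v) ∉ X)
    {a b c : V} (hab : a ≠ b) (hac : a ≠ c) (hbc : b ≠ c)
    (heven : ∀ v, edgeDegree X v % 2 = 0 ↔ v = a ∨ v = b ∨ v = c) (h : s(a, b) ∈ X) :
    HasSpecialDecomposition X a := by
  have hdeg := edgeDegree_erase hab h
  obtain ⟨M, hM, htriv, hcard, -, hends⟩ := exists_decomposes_of_unique_even
    (X := X.erase s(a, b)) (c := c) (fun v hv => hX v (Finset.mem_of_mem_erase hv))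
    (by have := hdeg c; have := heven c; grind) fun v hv => by
      have := hdeg v; have := heven v; grind
  refine ⟨_, hM.cons_edge hab h, by simpa using htriv, ?_, by simp; omega⟩
  rw [systemEnds_cons, endCount_pair, hends a hac]
  simp [hab]

theorem hasSpecialDecomposition_of_odd [Fintype V] {X : Finset (Sym2 V)} (hX : ∀ v, s(v, v) ∉ X)
    {a b c u : V} (hab : a ≠ b) (hac : a ≠ c) (hbc : b ≠ c)
    (heven : ∀ v, edgeDegree X v % 2 = 0 ↔ v = a ∨ v = b ∨ v = c)
    (hu : edgeDegree X u % 2 = 1) (ha : s(u, a) ∈ X) (hb : s(u, b) ∈ X) :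
    HasSpecialDecomposition X u := by
  have hua : u ≠ a := by rintro rfl; exact hX _ ha
  have hub : u ≠ b := by rintro rfl; exact hX _ hb
  have huc : u ≠ c := by rintro rfl; have := heven u; grind
  have hsne : ∀ {x y}, u ≠ x → x ≠ y → s(u, x) ≠ s(u, y) := by
    intro x y hx hxy; simp [hxy, hx.symm]
  -- finish once a decomposition missing a single edge at `u` has a path end at `u`
  have finish : ∀ (x : V) (M : Multiset (List V)), u ≠ x → s(u, x) ∈ X →
      Decomposes M (X.erase s(u, x)) → (∀ p ∈ M, 2 ≤ p.length) →
      2 * M.card + 1 = Fintype.card V → 1 ≤ systemEnds M u → HasSpecialDecomposition X u := by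
    intro x M hux hx hM htriv hcard hends
    refine ⟨_, hM.cons_edge hux hx, by simpa using htriv, ?_, by simp; omega⟩
    rw [systemEnds_cons, endCount_pair]
    simp only [hux, if_true, if_false]
    omega
  have ha' : s(u, a) ∈ X.erase s(u, b) := Finset.mem_erase.2 ⟨hsne hua hab, ha⟩
  have hdegb := edgeDegree_erase hub hb
  have hdega := edgeDegree_erase hua ha'
  by_cases hc : s(u, c) ∈ X
  · have hc' : s(u, c) ∈ (X.erase s(u, b)).erase s(u, a) := Finset.mem_erase.2
      ⟨hsne huc hac.symm, Finset.mem_erase.2 ⟨hsne huc hbc.symm, hc⟩⟩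
    have hdegc := edgeDegree_erase huc hc'
    obtain ⟨M, hM, htriv, hcard, hMu, hends⟩ := exists_decomposes_of_unique_even
      (X := ((X.erase s(u, b)).erase s(u, a)).erase s(u, c)) (c := u)
      (fun v hv => hX v (by simp only [Finset.mem_erase] at hv; exact hv.2.2.2))
      (by have := hdega u; have := hdegb u; have := hdegc u; grind) fun v hv => by
        have := hdega v; have := hdegb v; have := hdegc v; have := heven v; grind
    rw [Finset.erase_right_comm (a := s(u, a))] at hM
    obtain ⟨M₁, hM₁, hmove₁⟩ := hM.absorb hua
      (Finset.mem_erase.2 ⟨hsne hua hac, ha'⟩) fun v hv => by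
        rw [hends v (by rintro rfl; exact hX _ (by simp only [Finset.mem_erase] at hv; exact hv.2.2))]
        exact one_pos
    have hcases := hM₁.absorb_or_absorb (z := a) hub huc hbc hb hc fun v hva hv => by
      have hvu : v ≠ u := by rintro rfl; exact hX _ hv
      have h1 := hmove₁.ends_eq v
      simp only [hva, hvu, if_false, hends v hvu] at h1
      omega
    rcases hcases with ⟨M₂, hM₂, hmove₂⟩ | ⟨M₂, hM₂, hmove₂⟩
    · refine finish c M₂ huc hc hM₂ (hmove₂.nontrivial (hmove₁.nontrivial htriv))
        (by rw [hmove₂.card_eq, hmove₁.card_eq, hcard]) ?_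
      have h2 := hmove₂.ends_eq u
      simp only [hub, if_true, if_false] at h2
      omega
    · refine finish b M₂ hub hb hM₂ (hmove₂.nontrivial (hmove₁.nontrivial htriv))
        (by rw [hmove₂.card_eq, hmove₁.card_eq, hcard]) ?_
      have h2 := hmove₂.ends_eq u
      simp only [huc, if_true, if_false] at h2
      omega
  · obtain ⟨M, hM, htriv, hcard, -, hends⟩ := exists_decomposes_of_unique_even
      (X := (X.erase s(u, b)).erase s(u, a)) (c := c)
      (fun v hv => hX v (by simp only [Finset.mem_erase] at hv; exact hv.2.2))
      (by have := hdega c; have := hdegb c; have := heven c; grind) fun v hv => by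
        have := hdega v; have := hdegb v; have := heven v; grind
    obtain ⟨M', hM', hmove⟩ := hM.absorb hua ha' fun v hv => by
      rw [hends v (by rintro rfl; exact hc (Finset.mem_of_mem_erase hv))]; exact one_pos
    have := hmove.ends_eq u
    have := hends u huc
    exact finish b M' hub hb hM' (hmove.nontrivial htriv) (by rw [hmove.card_eq, hcard])
      (by simp only [hua, if_true, if_false] at *; omega)

end Triangle

section Walks

variable {G : SimpleGraph V}

theorem SimpleGraph.Walk.coe_edges_eq_pathEdges {a b : V} (w : G.Walk a b) :
    (w.edges : Multiset (Sym2 V)) = pathEdges w.support := by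
  induction w with
  | nil => rfl
  | cons h w ih =>
    rw [SimpleGraph.Walk.edges_cons, SimpleGraph.Walk.support_cons, ← Multiset.cons_coe, ih]
    cases w <;> rfl

theorem exists_walk_support_eq (l : List V) (x : V)
    (h : ∀ e ∈ pathEdges (x :: l), e ∈ G.edgeSet) :
    ∃ (b : V) (w : G.Walk x b), w.support = x :: l := by
  induction l generalizing x with
  | nil => exact ⟨x, .nil, rfl⟩
  | cons y l ih =>
    simp only [pathEdges, Multiset.mem_cons, forall_eq_or_imp] at h
    obtain ⟨b, w, hw⟩ := ih y h.2
    have hadj : G.Adj x y := h.1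
    exact ⟨b, .cons hadj w, by rw [SimpleGraph.Walk.support_cons, hw]⟩

theorem IsPathSystem.exists_walks {M : Multiset (List V)} (hM : IsPathSystem M)
    (h : ∀ e ∈ systemEdges M, e ∈ G.edgeSet) :
    ∃ L : List (Σ a b : V, G.Walk a b),
      ((L.map fun w => w.2.2.support : List _) : Multiset _) = M := by
  induction M using Multiset.induction with
  | empty => exact ⟨[], rfl⟩
  | cons p M ih =>
    simp only [systemEdges_cons, Multiset.mem_add] at h
    rw [isPathSystem_cons] at hM
    obtain ⟨L, hL⟩ := ih hM.2 fun e he => h e (Or.inr he)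
    obtain ⟨x, l, rfl⟩ := List.exists_cons_of_ne_nil hM.1.1
    obtain ⟨b, w, hw⟩ := exists_walk_support_eq l x fun e he => h e (Or.inl he)
    exact ⟨⟨x, b, w⟩ :: L, by simp [hw, ← hL]⟩

theorem systemEdges_coe_support (L : List (Σ a b : V, G.Walk a b)) :
    systemEdges ((L.map fun w => w.2.2.support : List _) : Multiset _) =
      ((L.flatMap fun w => w.2.2.edges : List (Sym2 V)) : Multiset (Sym2 V)) := by
  induction L with
  | nil => rfl
  | cons w L ih =>
    rw [List.map_cons, ← Multiset.cons_coe, systemEdges_cons, ih, List.flatMap_cons,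
      ← Multiset.coe_add, SimpleGraph.Walk.coe_edges_eq_pathEdges]

theorem systemEnds_coe_support_le [DecidableEq V] (L : List (Σ a b : V, G.Walk a b))
    (hlen : ∀ w ∈ L, 0 < w.2.2.length) (hpath : ∀ w ∈ L, w.2.2.IsPath) (u : V) :
    systemEnds ((L.map fun w => w.2.2.support : List _) : Multiset _) u ≤
      (L.filter fun w => w.1 = u ∨ w.2.1 = u).length := by
  induction L with
  | nil => simp [systemEnds]
  | cons w L ih =>
    simp only [List.mem_cons, forall_eq_or_imp] at hlen hpath
    have ih := ih hlen.2 hpath.2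
    obtain ⟨a, b, w⟩ := w
    have hab : a ≠ b := by
      rintro rfl
      have hnil := SimpleGraph.Walk.isPath_iff_nil.1 hpath.1
      exact hlen.1.ne' (SimpleGraph.Walk.length_eq_zero_iff.2 hnil)
    have hhead : w.support.head? = some a := by
      rw [List.head?_eq_some_head w.support_ne_nil, SimpleGraph.Walk.head_support]
    have hlast : w.support.getLast? = some b := by
      rw [List.getLast?_eq_some_getLast w.support_ne_nil, SimpleGraph.Walk.getLast_support]
    rw [List.map_cons, ← Multiset.cons_coe, systemEnds_cons, List.filter_cons]
    simp only [endCount, hhead, hlast, Option.some.injEq]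
    by_cases ha : a = u <;> by_cases hb : b = u <;> simp_all <;> omega

end Walks

theorem edgeDegree_edgeFinset [Fintype V] [DecidableEq V] (K : SimpleGraph V) [DecidableRel K.Adj]
    (v : V) : edgeDegree K.edgeFinset v = ndeg K v := by
  have h1 : ndeg K v = K.degree v := by
    rw [ndeg, ← SimpleGraph.card_neighborFinset_eq_degree, ← Set.ncard_coe_finset]
    congr 1
    ext w
    simp
  rw [h1, ← SimpleGraph.card_incidenceFinset_eq_degree, SimpleGraph.incidenceFinset_eq_filter]
  rfl

theorem HasSpecialDecomposition.exists_pathDecomp [Fintype V] [DecidableEq V] {K : SimpleGraph V}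
    [DecidableRel K.Adj] {u : V} (h : HasSpecialDecomposition K.edgeFinset u) :
    ∃ D : PathDecomp K, 2 ≤ ends D u ∧ pdCard D ≤ (Fintype.card V + 1) / 2 := by
  obtain ⟨M, hM, htriv, hends, hcard⟩ := h
  obtain ⟨L, rfl⟩ := hM.isPathSystem.exists_walks (G := K) fun e he => by
    rw [hM.edges_eq] at he; simpa using he
  have hlen : ∀ w ∈ L, 0 < w.2.2.length := fun w hw => by
    have := htriv w.2.2.support (by simpa using ⟨_, _, _, hw, rfl⟩)
    rw [SimpleGraph.Walk.length_support] at this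
    omega
  have hpath : ∀ w ∈ L, w.2.2.IsPath := fun w hw => by
    rw [SimpleGraph.Walk.isPath_def]
    exact (hM.isPathSystem w.2.2.support (by simpa using ⟨_, _, _, hw, rfl⟩)).2
  have hE := hM.edges_eq
  rw [systemEdges_coe_support] at hE
  have hnodup : (L.flatMap fun w => w.2.2.edges).Nodup := by
    rw [← Multiset.coe_nodup, hE]; exact Finset.nodup _
  refine ⟨⟨L, hlen, hpath, ?_, fun e he => ?_⟩, ?_, ?_⟩
  · exact (List.nodup_flatMap.1 hnodup).2.imp fun h e he he' => h he he'
  · rw [← List.mem_flatMap, ← Multiset.mem_coe, hE]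
    simpa using he
  · exact hends.trans (systemEnds_coe_support_le L hlen hpath u)
  · simp only [Multiset.coe_card, List.length_map] at hcard
    simp only [pdCard]
    omega

theorem set_graph_special_decomposition [Fintype V] [DecidableEq V]
    (K : SimpleGraph V) (h : IsSETGraph K) (u : V) :
    ∃ D : PathDecomp K, 2 ≤ ends D u ∧ pdCard D ≤ (Fintype.card V + 1) / 2 := by
  classical
  obtain ⟨⟨a, b, c, hab, hac, hbc, heven, h1, h2, h3⟩, hodd⟩ := h
  refine HasSpecialDecomposition.exists_pathDecomp ?_
  have hmem : ∀ {x y}, K.Adj x y → s(x, y) ∈ K.edgeFinset := fun h => by simpa using h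
  have hX : ∀ v, s(v, v) ∉ K.edgeFinset := by simp
  have hiff : ∀ v, Even (ndeg K v) ↔ v = a ∨ v = b ∨ v = c := fun v => by
    simpa using Set.ext_iff.1 heven v
  have hdeg : ∀ v, edgeDegree K.edgeFinset v % 2 = 0 ↔ v = a ∨ v = b ∨ v = c := fun v => by
    rw [edgeDegree_edgeFinset, ← Nat.even_iff, hiff]
  by_cases hu : Even (ndeg K u)
  · rcases (hiff u).1 hu with rfl | rfl | rfl
    · exact hasSpecialDecomposition_of_even hX hab hac hbc hdeg (hmem h1)
    · exact hasSpecialDecomposition_of_even hX hab.symm hbc hac (fun v => by rw [hdeg]; tauto)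
        (hmem h1.symm)
    · exact hasSpecialDecomposition_of_even hX hac.symm hbc.symm hab (fun v => by rw [hdeg]; tauto)
        (hmem h2.symm)
  · rw [Nat.not_even_iff_odd] at hu
    obtain ⟨w₁, w₂, hne, hw₁, hw₂, he₁, he₂⟩ := hodd u hu
    have huo : edgeDegree K.edgeFinset u % 2 = 1 := by
      rw [edgeDegree_edgeFinset]; exact Nat.odd_iff.1 hu
    obtain ⟨z, hz₁, hz₂, hz⟩ : ∃ z, w₁ ≠ z ∧ w₂ ≠ z ∧
        ∀ v, (v = a ∨ v = b ∨ v = c) ↔ v = w₁ ∨ v = w₂ ∨ v = z := by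
      rw [hiff] at he₁ he₂
      rcases he₁ with rfl | rfl | rfl <;> rcases he₂ with rfl | rfl | rfl <;>
        first
        | exact absurd rfl hne
        | exact ⟨a, by tauto, by tauto, fun v => by tauto⟩
        | exact ⟨b, by tauto, by tauto, fun v => by tauto⟩
        | exact ⟨c, by tauto, by tauto, fun v => by tauto⟩
    exact hasSpecialDecomposition_of_odd hX hne hz₁ hz₂ (fun v => (hdeg v).trans (hz v)) huo
      (hmem hw₁) (hmem hw₂)
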